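/- Minkowski sum lattice point surjectivity for compatible polygons: if A is a 2-dimensional smooth lattice polygon and B is a lattice polygon whose normal fan is refined by that of A, then (A + B) ∩ ℤ² = (A ∩ ℤ²) + (B ∩ ℤ²). -/

import Mathlib

open scoped Pointwise

def IsLatticePt {d : ℕ} (x : Fin d → ℝ) : Prop := ∀ i, ∃ z : ℤ, x i = (z : ℝ)

def IsLatticePolytope {d : ℕ} (P : Set (Fin d → ℝ)) : Prop :=
  ∃ V : Finset (Fin d → ℝ), V.Nonempty ∧ (∀ v ∈ V, IsLatticePt v) ∧ P = convexHull ℝ ↑V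

def IsNormalPolytope {d : ℕ} (P : Set (Fin d → ℝ)) : Prop :=
  ∀ n : ℕ, 1 ≤ n → ∀ x ∈ (n : ℝ) • P, IsLatticePt x →
    ∃ f : Fin n → (Fin d → ℝ), (∀ i, f i ∈ P ∧ IsLatticePt (f i)) ∧ x = ∑ i, f i

def P1 : Set (Fin 3 → ℝ) := convexHull ℝ {![0,0,0], ![1,0,0], ![0,1,0], ![0,0,1]}

def dot2 (x y : Fin 2 → ℝ) : ℝ := ∑ i, x i * y i

def normalCone (P : Set (Fin 2 → ℝ)) (u : Fin 2 → ℝ) : Set (Fin 2 → ℝ) :=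
  {y | ∀ x ∈ P, dot2 x y ≤ dot2 u y}

/-- The normal fan of `A` refines the normal fan of `B`: every normal cone of `A`
is contained in some normal cone of `B`. -/
def FanRefines (A B : Set (Fin 2 → ℝ)) : Prop :=
  ∀ u ∈ A, ∃ v ∈ B, normalCone A u ⊆ normalCone B v

/-- At every vertex the primitive edge directions form a ℤ-basis of ℤ². -/
def IsSmoothPolygon (F : Set (Fin 2 → ℝ)) : Prop :=
  ∀ u ∈ Set.extremePoints ℝ F, ∃ m₁ m₂ : Fin 2 → ℤ,
    (m₁ 0 * m₂ 1 - m₁ 1 * m₂ 0 = 1 ∨ m₁ 0 * m₂ 1 - m₁ 1 * m₂ 0 = -1) ∧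
    {y : Fin 2 → ℝ | ∃ t : ℝ, ∃ x ∈ F, 0 ≤ t ∧ y = t • (x - u)} =
      {y : Fin 2 → ℝ | ∃ a b : ℝ, 0 ≤ a ∧ 0 ≤ b ∧
        y = a • (fun i => (m₁ i : ℝ)) + b • (fun i => (m₂ i : ℝ))}

def emb (v : Fin 2 → ℝ) (t : ℝ) : Fin 3 → ℝ := ![v 0, v 1, t]

def cayley (F G : Set (Fin 2 → ℝ)) : Set (Fin 3 → ℝ) :=
  convexHull ℝ ((fun v => emb v 0) '' F ∪ (fun v => emb v 1) '' G)

lemma dot2_eq (x y : Fin 2 → ℝ) : dot2 x y = x 0 * y 0 + x 1 * y 1 := by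
  simp [dot2, Fin.sum_univ_two]

lemma hull_le (V : Set (Fin 2 → ℝ)) (n : Fin 2 → ℝ) (M : ℝ) (h : ∀ v ∈ V, dot2 v n ≤ M) :
    ∀ y ∈ convexHull ℝ V, dot2 y n ≤ M := by
  have hc : Convex ℝ {y : Fin 2 → ℝ | dot2 y n ≤ M} := by
    intro x hx y hy a b ha hb hab
    simp only [Set.mem_ofPred_eq, dot2_eq, Pi.add_apply, Pi.smul_apply, smul_eq_mul] at *
    have : b = 1 - a := by linarith
    subst this
    nlinarith [mul_le_mul_of_nonneg_left hx ha, mul_le_mul_of_nonneg_left hy hb]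
  intro y hy
  exact convexHull_min (fun v hv => h v hv) hc hy

/-- Some point of `V` is at least as large as a given point of the hull. -/
lemma exists_ge (V : Finset (Fin 2 → ℝ)) (n y : Fin 2 → ℝ)
    (hy : y ∈ convexHull ℝ (V : Set (Fin 2 → ℝ))) :
    ∃ v ∈ V, dot2 y n ≤ dot2 v n := by
  have hne : V.Nonempty := by
    rcases V.eq_empty_or_nonempty with h | h
    · subst h; simp at hy
    · exact h
  obtain ⟨v, hv, hmax⟩ := V.exists_max_image (fun v => dot2 v n) hne
  exact ⟨v, hv, hull_le _ n _ (fun w hw => hmax w hw) y hy⟩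

/-- Integer Helly (Doignon) in the plane, minimal form. -/
lemma doignon_min {ι : Type*} [Fintype ι] [DecidableEq ι] (W : Finset (Fin 2 → ℤ))
    (g : ι → (Fin 2 → ℤ) → ℝ)
    (hmid : ∀ p ∈ W, ∀ q ∈ W, ∀ m : Fin 2 → ℤ, p + q = m + m → m ∈ W)
    (haff : ∀ i, ∀ p q m : Fin 2 → ℤ, p + q = m + m → g i p + g i q = 2 * g i m)
    (hinf : ∀ w ∈ W, ∃ i, 0 < g i w)
    (hmin : ∀ i, ∃ w ∈ W, ∀ j, j ≠ i → g j w ≤ 0)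
    (hcard : 4 < Fintype.card ι) : False := by
  classical
  let S : Finset (ι → (Fin 2 → ℤ)) := (Fintype.piFinset (fun _ => W)).filter (fun p =>
    (∀ w ∈ W, ∃ i, g i (p i) ≤ g i w) ∧
    (∀ i, ∃ w ∈ W, ∀ j, j ≠ i → g j w < g j (p j)))
  have hS : S.Nonempty := by
    have h0 : ∀ i, ∃ p ∈ W, 0 < g i p ∧ ∀ w ∈ W, 0 < g i w → g i p ≤ g i w := by
      intro i
      have hne : (W.filter (fun w => 0 < g i w)).Nonempty := by
        obtain ⟨w, hw, hj⟩ := hmin i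
        obtain ⟨k, hk⟩ := hinf w hw
        by_cases hki : k = i
        · subst hki; exact ⟨w, by simp [hw, hk]⟩
        · linarith [hj k hki]
      obtain ⟨p, hp, hpm⟩ := (W.filter (fun w => 0 < g i w)).exists_min_image (g i) hne
      simp only [Finset.mem_filter] at hp hpm
      exact ⟨p, hp.1, hp.2, fun w hw h => hpm w ⟨hw, h⟩⟩
    choose p hpW hp0 hpm using h0
    refine ⟨p, ?_⟩
    simp only [S, Finset.mem_filter, Fintype.mem_piFinset]
    refine ⟨hpW, fun w hw => ?_, fun i => ?_⟩
    · obtain ⟨i, hi⟩ := hinf w hw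
      exact ⟨i, hpm i w hw hi⟩
    · obtain ⟨w, hw, hj⟩ := hmin i
      exact ⟨w, hw, fun j hji => (hj j hji).trans_lt (hp0 j)⟩
  obtain ⟨p, hp, hpmax⟩ := S.exists_max_image (fun p => ∑ i, g i (p i)) hS
  have hp' := hp
  simp only [S, Finset.mem_filter, Fintype.mem_piFinset] at hp'
  obtain ⟨hpW, hI, hM⟩ := hp'
  have key : ∀ k, ∃ w ∈ W, g k w = g k (p k) ∧ ∀ j, j ≠ k → g j w < g j (p j) := by
    intro k
    have hne : (W.filter (fun w => ∀ j, j ≠ k → g j w < g j (p j))).Nonempty := by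
      obtain ⟨w, hw, h⟩ := hM k
      exact ⟨w, by simp only [Finset.mem_filter]; exact ⟨hw, h⟩⟩
    obtain ⟨w, hw, hwm⟩ := Finset.exists_min_image _ (g k) hne
    simp only [Finset.mem_filter] at hw hwm
    have hge : g k (p k) ≤ g k w := by
      obtain ⟨i, hi⟩ := hI w hw.1
      by_cases hik : i = k
      · subst hik; exact hi
      · linarith [hw.2 i hik]
    refine ⟨w, hw.1, ?_, hw.2⟩
    by_contra hne'
    have hlt : g k (p k) < g k w := lt_of_le_of_ne hge (Ne.symm hne')
    have hle : ∀ j, g j (p j) ≤ g j (Function.update p k w j) := by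
      intro j
      by_cases hjk : j = k
      · subst hjk; simpa using hge
      · simp [hjk]
    have hmem : Function.update p k w ∈ S := by
      simp only [S, Finset.mem_filter, Fintype.mem_piFinset]
      refine ⟨fun i => ?_, fun v hv => ?_, fun i => ?_⟩
      · by_cases hik : i = k
        · subst hik; simpa using hw.1
        · simpa [hik] using hpW i
      · by_cases hall : ∀ j, j ≠ k → g j v < g j (p j)
        · exact ⟨k, by simpa using hwm v ⟨hv, hall⟩⟩
        · push Not at hall
          obtain ⟨j, hjk, hj⟩ := hall
          exact ⟨j, by simpa [hjk] using hj⟩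
      · obtain ⟨v, hv, h⟩ := hM i
        exact ⟨v, hv, fun j hj => (h j hj).trans_le (hle j)⟩
    have h1 := hpmax _ hmem
    have h2 : ∑ i, g i (p i) < ∑ i, g i (Function.update p k w i) :=
      Finset.sum_lt_sum (fun i _ => hle i) ⟨k, Finset.mem_univ _, by simpa using hlt⟩
    linarith
  choose w hwW hweq hwlt using key
  let par : ι → ZMod 2 × ZMod 2 := fun i => ((w i 0 : ZMod 2), (w i 1 : ZMod 2))
  obtain ⟨i, j, hij, hpar⟩ := Fintype.exists_ne_map_eq_of_card_lt par (by
    simpa [Fintype.card_prod, ZMod.card] using hcard)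
  simp only [par, Prod.mk.injEq] at hpar
  have e0 := (ZMod.intCast_eq_intCast_iff_dvd_sub _ _ 2).1 hpar.1
  have e1 := (ZMod.intCast_eq_intCast_iff_dvd_sub _ _ 2).1 hpar.2
  obtain ⟨a, ha⟩ := e0
  obtain ⟨b, hb⟩ := e1
  have hm : w i + w j = (w i + ![a, b]) + (w i + ![a, b]) := by
    ext t
    fin_cases t
    · change w i 0 + w j 0 = (w i 0 + a) + (w i 0 + a)
      push_cast at ha; linarith
    · change w i 1 + w j 1 = (w i 1 + b) + (w i 1 + b)
      push_cast at hb; linarith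
  obtain ⟨k, hk⟩ := hI _ (hmid _ (hwW i) _ (hwW j) _ hm)
  have h2 := haff k _ _ _ hm
  have hle : ∀ l, g k (w l) ≤ g k (p k) := by
    intro l
    by_cases hkl : k = l
    · subst hkl; exact (hweq k).le
    · exact (hwlt l k hkl).le
  by_cases hki : k = i
  · have := hwlt j k (by rw [hki]; exact hij)
    linarith [hle i]
  · have := hwlt i k hki
    linarith [hle j]

lemma doignon {ι : Type*} [DecidableEq ι] (W : Finset (Fin 2 → ℤ))
    (g : ι → (Fin 2 → ℤ) → ℝ)
    (hmid : ∀ p ∈ W, ∀ q ∈ W, ∀ m : Fin 2 → ℤ, p + q = m + m → m ∈ W)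
    (haff : ∀ i, ∀ p q m : Fin 2 → ℤ, p + q = m + m → g i p + g i q = 2 * g i m)
    (s : Finset ι) (hinf : ∀ w ∈ W, ∃ i ∈ s, 0 < g i w) :
    ∃ t ⊆ s, t.card ≤ 4 ∧ ∀ w ∈ W, ∃ i ∈ t, 0 < g i w := by
  induction s using Finset.strongInduction with
  | H s ih =>
    by_cases hc : s.card ≤ 4
    · exact ⟨s, subset_rfl, hc, hinf⟩
    by_cases hm : ∃ i ∈ s, ∀ w ∈ W, ∃ j ∈ s.erase i, 0 < g j w
    · obtain ⟨i, hi, h⟩ := hm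
      obtain ⟨t, ht, h1, h2⟩ := ih _ (Finset.erase_ssubset hi) h
      exact ⟨t, ht.trans (Finset.erase_subset _ _), h1, h2⟩
    exfalso
    push Not at hm
    refine doignon_min (ι := s) W (fun i => g i) hmid (fun i => haff i) ?_ ?_ ?_
    · intro w hw
      obtain ⟨i, hi, h⟩ := hinf w hw
      exact ⟨⟨i, hi⟩, h⟩
    · rintro ⟨i, hi⟩
      obtain ⟨w, hw, h⟩ := hm i hi
      refine ⟨w, hw, ?_⟩
      rintro ⟨j, hj⟩ hne
      exact h j (Finset.mem_erase.2 ⟨fun h => hne (Subtype.ext h), hj⟩)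
    · simpa using hc

/-- The matching condition extracted from the refinement of normal fans: each direction in which
`convexHull VC` has a nontrivial minimal face, `convexHull VA` has a nontrivial maximal face. -/
def Matching (VA VC : Finset (Fin 2 → ℝ)) : Prop :=
  ∀ N : Fin 2 → ℝ, (∃ q ∈ VC, ∃ q' ∈ VC, q ≠ q' ∧ dot2 q N = dot2 q' N ∧
      ∀ y ∈ VC, dot2 q N ≤ dot2 y N) →
    ∃ r ∈ VA, ∃ r' ∈ VA, r ≠ r' ∧ dot2 r N = dot2 r' N ∧ ∀ y ∈ VA, dot2 y N ≤ dot2 r N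

lemma eq_of_det {c d e : Fin 2 → ℝ} (hdet : c 0 * d 1 - c 1 * d 0 ≠ 0)
    (h1 : dot2 e c = 0) (h2 : dot2 e d = 0) : e = 0 := by
  rw [dot2_eq] at h1 h2
  have e0 : e 0 * (c 0 * d 1 - c 1 * d 0) = 0 := by linear_combination d 1 * h1 - c 1 * h2
  have e1 : e 1 * (c 0 * d 1 - c 1 * d 0) = 0 := by linear_combination c 0 * h2 - d 0 * h1
  ext i
  fin_cases i
  · simpa [hdet] using e0
  · simpa [hdet] using e1

/-- Final contradiction once the edges are found. -/
lemma wedge_finish (C : Set (Fin 2 → ℝ)) (hCc : Convex ℝ C)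
    (c d : Fin 2 → ℝ) (α β s M : ℝ) (hs0 : 0 < s) (hs1 : s < 1)
    (hdet : c 0 * d 1 - c 1 * d 0 ≠ 0)
    (hC : ∀ q ∈ C, IsLatticePt q → α < dot2 q c ∨ β < dot2 q d)
    (q q' r r' : Fin 2 → ℝ) (hqC : q ∈ C) (hqC' : q' ∈ C)
    (hq : IsLatticePt q) (hr : IsLatticePt r) (hr' : IsLatticePt r')
    (hqX : α < dot2 q c) (hqY' : β < dot2 q' d)
    (hqM : (1 - s) * (α - dot2 q c) + s * (β - dot2 q d) = M)
    (hqM' : (1 - s) * (α - dot2 q' c) + s * (β - dot2 q' d) = M)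
    (hM : 0 < M) (m : ℝ) (hmM : m ≤ M)
    (hrm : (1 - s) * (α - dot2 r c) + s * (β - dot2 r d) = m)
    (hrm' : (1 - s) * (α - dot2 r' c) + s * (β - dot2 r' d) = m)
    (hrY : dot2 r c < α) (hrY' : dot2 r' d < β) (hlt : dot2 r' c < dot2 r c) : False := by
  -- step vector
  set k : Fin 2 → ℝ := r' - r with hk
  set v : Fin 2 → ℝ := q' - q with hv
  have dsub : ∀ a b n : Fin 2 → ℝ, dot2 (a - b) n = dot2 a n - dot2 b n := by
    intro a b n; simp only [dot2_eq, Pi.sub_apply]; ring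
  have dadd : ∀ a b n : Fin 2 → ℝ, dot2 (a + b) n = dot2 a n + dot2 b n := by
    intro a b n; simp only [dot2_eq, Pi.add_apply]; ring
  have dsmul : ∀ (t : ℝ) (b n : Fin 2 → ℝ), dot2 (t • b) n = t * dot2 b n := by
    intro a b n; simp only [dot2_eq, Pi.smul_apply, smul_eq_mul]; ring
  have hs1' : 0 < 1 - s := by linarith
  set ξ : ℝ := dot2 r c - dot2 r' c with hξ
  have hξ0 : 0 < ξ := by linarith
  -- (1-s) ξ < M
  have hξM : (1 - s) * ξ < M := by
    have h1 : 0 < s * (β - dot2 r' d) := mul_pos hs0 (by linarith)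
    have h2 : 0 < (1 - s) * (α - dot2 r c) := mul_pos hs1' (by linarith)
    have : (1 - s) * ξ = (1 - s) * (α - dot2 r' c) - (1 - s) * (α - dot2 r c) := by
      rw [hξ]; ring
    linarith
  have hq'X : M < (1 - s) * (α - dot2 q' c) := by
    have h1 : s * (β - dot2 q' d) < 0 := mul_neg_of_pos_of_neg hs0 (by linarith)
    linarith
  set η : ℝ := dot2 q c - dot2 q' c with hη
  have hη0 : 0 < η := by
    have : 0 < α - dot2 q' c := by
      by_contra h
      push Not at h
      have := mul_nonpos_of_nonneg_of_nonpos hs1'.le h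
      linarith
    linarith
  -- k is parallel to v
  have hpar : k = (ξ / η) • v := by
    rw [← sub_eq_zero]
    have hc0 : dot2 (k - (ξ / η) • v) c = 0 := by
      rw [dsub, dsmul, hk, hv, dsub, dsub]
      have : dot2 q' c - dot2 q c = - η := by rw [hη]; ring
      rw [this]; field_simp; rw [hξ]; ring
    refine eq_of_det hdet hc0 ?_
    have hkN : (1 - s) * dot2 k c + s * dot2 k d = 0 := by
      rw [hk, dsub, dsub]; linear_combination hrm - hrm'
    have hvN : (1 - s) * dot2 v c + s * dot2 v d = 0 := by
      rw [hv, dsub, dsub]; linear_combination hqM - hqM'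
    have : s * dot2 (k - (ξ / η) • v) d = 0 := by
      rw [dsub, dsmul] at hc0 ⊢
      linear_combination hkN - (ξ / η) * hvN - (1 - s) * hc0
    exact (mul_eq_zero.1 this).resolve_left hs0.ne'
  have hex : ∃ j : ℕ, dot2 q c - α ≤ j * ξ := by
    obtain ⟨j, hj⟩ := exists_nat_ge ((dot2 q c - α) / ξ)
    exact ⟨j, by rwa [div_le_iff₀ hξ0] at hj⟩
  classical
  let j := Nat.find hex
  have hj : dot2 q c - α ≤ j * ξ := Nat.find_spec hex
  have hj0 : j ≠ 0 := by
    intro h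
    rw [h] at hj
    simp at hj
    linarith
  obtain ⟨l, hl⟩ := Nat.exists_eq_succ_of_ne_zero hj0
  have hl' : (l : ℝ) * ξ < dot2 q c - α := by
    have := Nat.find_min hex (m := l) (by change l < j; omega)
    push Not at this
    exact this
  have hjl : (j : ℝ) = l + 1 := by rw [hl]; push_cast; ring
  have hkc : dot2 k c = - ξ := by rw [hk, dsub, hξ]; ring
  have hjlt : (j : ℝ) * ξ < dot2 q c - α + ξ := by rw [hjl]; linarith
  have hjη : (j : ℝ) * ξ ≤ η := by
    have h1 : (1 - s) * ξ < (1 - s) * (α - dot2 q' c) := by linarith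
    have := lt_of_mul_lt_mul_left h1 hs1'.le
    rw [hη]; linarith
  have hz : q + (j : ℝ) • k ∈ C := by
    have : q + (j : ℝ) • k = (1 - j * ξ / η) • q + (j * ξ / η) • q' := by
      rw [hpar, hv]; ext i; simp only [Pi.add_apply, Pi.smul_apply, Pi.sub_apply, smul_eq_mul]; ring
    rw [this]
    refine hCc hqC hqC' ?_ (by positivity) (by ring)
    rw [sub_nonneg, div_le_one hη0]; exact hjη
  have hlat : IsLatticePt (q + (j : ℝ) • k) := by
    intro i
    obtain ⟨a, ha⟩ := hq i
    obtain ⟨b, hb⟩ := hr i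
    obtain ⟨b', hb'⟩ := hr' i
    refine ⟨a + j * (b' - b), ?_⟩
    simp only [hk, Pi.add_apply, Pi.smul_apply, Pi.sub_apply, smul_eq_mul, ha, hb, hb']
    push_cast; ring
  have hkN : (1 - s) * dot2 k c + s * dot2 k d = 0 := by
    rw [hk, dsub, dsub]; linear_combination hrm - hrm'
  rcases hC _ hz hlat with h | h
  · rw [dadd, dsmul, hkc] at h; linarith
  · have h1 : s * (β - dot2 (q + (j : ℝ) • k) d) < 0 := mul_neg_of_pos_of_neg hs0 (by linarith)
    rw [dadd, dsmul] at h1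
    have h2 : (1 - s) * (j * ξ) < (1 - s) * (dot2 q c - α + ξ) := mul_lt_mul_of_pos_left hjlt hs1'
    have h3 : s * dot2 k d = (1 - s) * ξ := by rw [hkc] at hkN; linarith
    have h4 : s * (β - (dot2 q d + j * dot2 k d)) = s * (β - dot2 q d) - j * ((1 - s) * ξ) := by
      rw [← h3]; ring
    rw [h4] at h1
    nlinarith

lemma wedge_strict (VA VC : Finset (Fin 2 → ℝ)) (latA : ∀ v ∈ VA, IsLatticePt v)
    (latC : ∀ v ∈ VC, IsLatticePt v) (hM : Matching VA VC) (y : Fin 2 → ℝ)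
    (hyA : y ∈ convexHull ℝ (VA : Set (Fin 2 → ℝ)))
    (hyC : y ∈ convexHull ℝ (VC : Set (Fin 2 → ℝ)))
    (c d : Fin 2 → ℝ) (α β : ℝ) (hdet : c 0 * d 1 - c 1 * d 0 ≠ 0)
    (hA : ∀ v ∈ VA, dot2 v c < α ∧ dot2 v d < β)
    (hC : ∀ q ∈ convexHull ℝ (VC : Set (Fin 2 → ℝ)), IsLatticePt q →
      α < dot2 q c ∨ β < dot2 q d) : False := by
  classical
  have dneg : ∀ a n : Fin 2 → ℝ, dot2 a (-n) = - dot2 a n := by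
    intro a n; simp only [dot2_eq, Pi.neg_apply]; ring
  have hVC : ∀ q ∈ VC, α < dot2 q c ∨ β < dot2 q d := fun q hq =>
    hC q (subset_convexHull ℝ _ hq) (latC q hq)
  have hyc : dot2 y c < α := by
    obtain ⟨v, hv, h⟩ := exists_ge VA c y hyA
    exact h.trans_lt (hA v hv).1
  have hyd : dot2 y d < β := by
    obtain ⟨v, hv, h⟩ := exists_ge VA d y hyA
    exact h.trans_lt (hA v hv).2
  let U := VC.filter (fun q => α < dot2 q c)
  let R := VC.filter (fun q => β < dot2 q d)
  let G : ℝ → (Fin 2 → ℝ) → ℝ := fun s q => (1 - s) * (α - dot2 q c) + s * (β - dot2 q d)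
  have hG : ∀ s, ∃ q ∈ VC, G s y ≤ G s q := by
    intro s
    obtain ⟨q, hq, h⟩ := exists_ge VC (-((1 - s) • c + s • d)) y hyC
    refine ⟨q, hq, ?_⟩
    simp only [dot2_eq, Pi.neg_apply, Pi.add_apply, Pi.smul_apply, smul_eq_mul, G] at h ⊢
    linarith
  obtain ⟨q0, hq0, hq0'⟩ := hG 0
  obtain ⟨q1, hq1, hq1'⟩ := hG 1
  simp only [G] at hq0' hq1'
  have hR0 : q0 ∈ R := by
    simp only [R, Finset.mem_filter]
    refine ⟨hq0, (hVC q0 hq0).resolve_left ?_⟩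
    linarith
  have hU1 : q1 ∈ U := by
    simp only [U, Finset.mem_filter]
    refine ⟨hq1, (hVC q1 hq1).resolve_right ?_⟩
    linarith
  have hU : U.Nonempty := ⟨_, hU1⟩
  have hR : R.Nonempty := ⟨_, hR0⟩
  let F : ℝ → ℝ := fun s => U.sup' hU (G s) - R.sup' hR (G s)
  have hGc : ∀ q, Continuous (fun s => G s q) := by
    intro q; simp only [G]; fun_prop
  have hF : Continuous F := by
    refine Continuous.sub ?_ ?_
    · exact Continuous.finset_sup'_apply hU (fun q _ => hGc q)
    · exact Continuous.finset_sup'_apply hR (fun q _ => hGc q)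
  have hU0 : U.sup' hU (G 0) ≤ 0 := by
    refine Finset.sup'_le _ _ (fun q hq => ?_)
    simp only [U, Finset.mem_filter] at hq
    simp only [G]; linarith
  have hR1 : R.sup' hR (G 1) ≤ 0 := by
    refine Finset.sup'_le _ _ (fun q hq => ?_)
    simp only [R, Finset.mem_filter] at hq
    simp only [G]; linarith
  have hF0 : F 0 < 0 := by
    have : G 0 q0 ≤ R.sup' hR (G 0) := Finset.le_sup' _ hR0
    have h2 : 0 < G 0 q0 := by simp only [G]; linarith
    simp only [F]; linarith
  have hF1 : 0 < F 1 := by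
    have : G 1 q1 ≤ U.sup' hU (G 1) := Finset.le_sup' _ hU1
    have h2 : 0 < G 1 q1 := by simp only [G]; linarith
    simp only [F]; linarith
  obtain ⟨s, ⟨hs0, hs1⟩, hs⟩ := intermediate_value_Icc (zero_le_one' ℝ) hF.continuousOn
    (show (0 : ℝ) ∈ Set.Icc (F 0) (F 1) from ⟨hF0.le, hF1.le⟩)
  have hs0' : 0 < s := by
    rcases hs0.eq_or_lt with h | h
    · subst h; linarith
    · exact h
  have hs1' : s < 1 := by
    rcases hs1.eq_or_lt with h | h
    · subst h; linarith
    · exact h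
  obtain ⟨q, hqU, hq⟩ := Finset.exists_mem_eq_sup' hU (G s)
  obtain ⟨q', hqR, hq'⟩ := Finset.exists_mem_eq_sup' hR (G s)
  have hqq : G s q = G s q' := by simp only [F] at hs; linarith
  have hmax : ∀ p ∈ VC, G s p ≤ G s q := by
    intro p hp
    rcases hVC p hp with h | h
    · rw [← hq]; exact Finset.le_sup' _ (by simp [U, hp, h])
    · rw [hqq, ← hq']; exact Finset.le_sup' _ (by simp [R, hp, h])
  have hyM : G s y ≤ G s q := by
    obtain ⟨p, hp, h⟩ := hG s
    exact h.trans (hmax p hp)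
  have hy0 : 0 < G s y := by
    have h1 : 0 < (1 - s) * (α - dot2 y c) := mul_pos (by linarith) (by linarith)
    have h2 : 0 < s * (β - dot2 y d) := mul_pos hs0' (by linarith)
    simp only [G]; linarith
  simp only [U, R, Finset.mem_filter] at hqU hqR
  have hqd : dot2 q d < β := by
    by_contra h
    push Not at h
    have h1 : 0 ≤ (1 - s) * (dot2 q c - α) := mul_nonneg (by linarith) (by linarith)
    have h2 : 0 ≤ s * (dot2 q d - β) := mul_nonneg hs0 (by linarith)
    have : G s q = -((1 - s) * (dot2 q c - α)) - s * (dot2 q d - β) := by simp only [G]; ring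
    linarith
  have hne : q ≠ q' := by
    rintro rfl
    linarith [hqR.2]
  have hGN : ∀ p, dot2 p ((1 - s) • c + s • d) = ((1 - s) * α + s * β) - G s p := by
    intro p
    simp only [dot2_eq, Pi.add_apply, Pi.smul_apply, smul_eq_mul, G]; ring
  obtain ⟨r, hr, r', hr', hrne, hrr, hrmax⟩ := hM ((1 - s) • c + s • d)
    ⟨q, hqU.1, q', hqR.1, hne, by rw [hGN, hGN, hqq], fun p hp => by
      rw [hGN, hGN]; linarith [hmax p hp]⟩
  have hGr : G s r = G s r' := by rw [hGN, hGN] at hrr; linarith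
  have hrM : G s r ≤ G s q := by
    obtain ⟨p, hp, h⟩ := exists_ge VA ((1 - s) • c + s • d) y hyA
    have := h.trans (hrmax p hp)
    rw [hGN, hGN] at this
    linarith
  have hcne : dot2 r' c ≠ dot2 r c := by
    intro h
    apply hrne
    rw [← sub_eq_zero]
    have hd : s * dot2 r d = s * dot2 r' d := by
      simp only [G] at hGr; rw [h] at hGr; linarith
    have hd' := mul_left_cancel₀ hs0'.ne' hd
    refine eq_of_det hdet ?_ ?_
    · simp only [dot2_eq, Pi.sub_apply] at h ⊢; linarith
    · simp only [dot2_eq, Pi.sub_apply] at hd' ⊢; linarith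
  have hqC := subset_convexHull ℝ (VC : Set (Fin 2 → ℝ)) hqU.1
  have hqC' := subset_convexHull ℝ (VC : Set (Fin 2 → ℝ)) hqR.1
  rcases lt_or_gt_of_ne hcne with h | h
  · exact wedge_finish _ (convex_convexHull ℝ _) c d α β s (G s q) hs0' hs1' hdet hC q q' r r'
      hqC hqC' (latC q hqU.1) (latA r hr) (latA r' hr') hqU.2 hqR.2 rfl hqq.symm (by linarith)
      (G s r) hrM rfl hGr.symm (hA r hr).1 (hA r' hr').2 h
  · exact wedge_finish _ (convex_convexHull ℝ _) c d α β s (G s q) hs0' hs1' hdet hC q q' r' r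
      hqC hqC' (latC q hqU.1) (latA r' hr') (latA r hr) hqU.2 hqR.2 rfl hqq.symm (by linarith)
      (G s r) hrM hGr.symm rfl (hA r' hr').1 (hA r hr).2 h

/-- Lattice point of the plane attached to an integer vector. -/
def toR (z : Fin 2 → ℤ) : Fin 2 → ℝ := fun i => (z i : ℝ)

lemma exists_toR {q : Fin 2 → ℝ} (hq : IsLatticePt q) : ∃ z, q = toR z := by
  choose z hz using hq
  exact ⟨z, funext hz⟩

lemma wedge (VA VC : Finset (Fin 2 → ℝ)) (latA : ∀ v ∈ VA, IsLatticePt v)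
    (latC : ∀ v ∈ VC, IsLatticePt v) (hM : Matching VA VC) (y : Fin 2 → ℝ)
    (hyA : y ∈ convexHull ℝ (VA : Set (Fin 2 → ℝ)))
    (hyC : y ∈ convexHull ℝ (VC : Set (Fin 2 → ℝ)))
    (c d : Fin 2 → ℝ) (α β : ℝ)
    (hA : ∀ v ∈ VA, dot2 v c < α ∧ dot2 v d < β)
    (W : Finset (Fin 2 → ℤ))
    (hW : ∀ z, toR z ∈ convexHull ℝ (VC : Set (Fin 2 → ℝ)) → z ∈ W)
    (hC : ∀ z, toR z ∈ convexHull ℝ (VC : Set (Fin 2 → ℝ)) →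
      α < dot2 (toR z) c ∨ β < dot2 (toR z) d) : False := by
  classical
  by_cases hdet : c 0 * d 1 - c 1 * d 0 ≠ 0
  · refine wedge_strict VA VC latA latC hM y hyA hyC c d α β hdet hA (fun q hq hl => ?_)
    obtain ⟨z, rfl⟩ := exists_toR hl
    exact hC z hq
  push Not at hdet
  have dneg : ∀ a n : Fin 2 → ℝ, dot2 a (-n) = - dot2 a n := by
    intro a n; simp only [dot2_eq, Pi.neg_apply]; ring
  have hyc : dot2 y c < α := by
    obtain ⟨v, hv, h⟩ := exists_ge VA c y hyA
    exact h.trans_lt (hA v hv).1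
  have hyd : dot2 y d < β := by
    obtain ⟨v, hv, h⟩ := exists_ge VA d y hyA
    exact h.trans_lt (hA v hv).2
  have hc : 0 < c 0 * c 0 + c 1 * c 1 := by
    by_contra h
    have h0 : c 0 = 0 := by nlinarith [mul_self_nonneg (c 0), mul_self_nonneg (c 1)]
    have h1 : c 1 = 0 := by nlinarith [mul_self_nonneg (c 0), mul_self_nonneg (c 1)]
    obtain ⟨q, hq, hqy⟩ := exists_ge VC (-d) y hyC
    rw [dneg, dneg] at hqy
    obtain ⟨z, rfl⟩ := exists_toR (latC q hq)
    rcases hC z (subset_convexHull ℝ _ hq) with h | h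
    · rw [dot2_eq, h0, h1] at h hyc; linarith
    · linarith
  let D : ℝ → Fin 2 → ℝ := fun t => d + t • ![-c 1, c 0]
  have hD : ∀ v, Continuous (fun t => dot2 v (D t)) := by
    intro v
    simp only [D, dot2_eq, Pi.add_apply, Pi.smul_apply, smul_eq_mul]
    fun_prop
  have hD0 : ∀ v, dot2 v (D 0) = dot2 v d := by intro v; simp only [D, zero_smul, add_zero]
  have ev1 : ∀ᶠ t in nhds (0 : ℝ), ∀ v ∈ VA, dot2 v (D t) < β := by
    rw [Filter.eventually_all_finset]
    intro v hv
    exact (hD v).continuousAt.eventually_lt continuousAt_const (by rw [hD0]; exact (hA v hv).2)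
  have ev2 : ∀ᶠ t in nhds (0 : ℝ), ∀ z ∈ W, toR z ∈ convexHull ℝ (VC : Set (Fin 2 → ℝ)) →
      α < dot2 (toR z) c ∨ β < dot2 (toR z) (D t) := by
    rw [Filter.eventually_all_finset]
    intro z hz
    by_cases hzC : toR z ∈ convexHull ℝ (VC : Set (Fin 2 → ℝ))
    · rcases hC z hzC with h | h
      · exact Filter.Eventually.of_forall (fun _ _ => Or.inl h)
      · have := continuousAt_const.eventually_lt (hD (toR z)).continuousAt
          (show β < dot2 (toR z) (D 0) by rw [hD0]; exact h)
        exact this.mono (fun t ht _ => Or.inr ht)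
    · exact Filter.Eventually.of_forall (fun _ h => absurd h hzC)
  obtain ⟨ε, hε, hball⟩ := Metric.eventually_nhds_iff.1 (ev1.and ev2)
  obtain ⟨h1, h2⟩ := hball (y := ε / 2) (by
    rw [Real.dist_eq, sub_zero, abs_of_pos (by linarith)]; linarith)
  refine wedge_strict VA VC latA latC hM y hyA hyC c (D (ε / 2)) α β ?_
    (fun v hv => ⟨(hA v hv).1, h1 v hv⟩) (fun q hq hl => ?_)
  · have : c 0 * D (ε / 2) 1 - c 1 * D (ε / 2) 0 = ε / 2 * (c 0 * c 0 + c 1 * c 1) := by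
      simp only [D, Pi.add_apply, Pi.smul_apply, smul_eq_mul, Matrix.cons_val_zero,
        Matrix.cons_val_one]
      linear_combination hdet
    rw [this]
    positivity
  · obtain ⟨z, rfl⟩ := exists_toR hl
    exact h2 z (hW z hq) hq

lemma separate (C : Set (Fin 2 → ℝ)) (hC : Convex ℝ C) (hcl : IsClosed C) (x : Fin 2 → ℝ)
    (hx : x ∉ C) : ∃ (f : Fin 2 → ℝ) (u : ℝ), (∀ a ∈ C, dot2 a f < u) ∧ u < dot2 x f := by
  obtain ⟨φ, u, h1, h2⟩ := geometric_hahn_banach_closed_point hC hcl hx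
  have hφ : ∀ a : Fin 2 → ℝ, φ a = dot2 a ![φ ![1, 0], φ ![0, 1]] := by
    intro a
    have : a = a 0 • ![1, 0] + a 1 • ![0, 1] := by
      ext i; fin_cases i <;> simp
    conv_lhs => rw [this]
    rw [map_add, map_smul, map_smul, dot2_eq]
    simp
  refine ⟨![φ ![1, 0], φ ![0, 1]], u, fun a ha => ?_, ?_⟩
  · rw [← hφ]; exact h1 a ha
  · rw [← hφ]; exact h2

lemma hull_bound (V : Finset (Fin 2 → ℝ)) :
    ∃ N : ℤ, ∀ n : ℤ, N ≤ n → ∀ z, toR z ∈ convexHull ℝ (V : Set (Fin 2 → ℝ)) →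
      z ∈ Finset.Icc (fun _ => -n) (fun _ => n) := by
  have hb := (V.finite_toSet.isCompact_convexHull (𝕜 := ℝ)).isBounded
  obtain ⟨R, hR⟩ := hb.exists_norm_le
  refine ⟨⌈R⌉, fun n hn z hz => ?_⟩
  have h1 : ∀ i, |(z i : ℝ)| ≤ n := by
    intro i
    have h2 := norm_le_pi_norm (toR z) i
    rw [Real.norm_eq_abs] at h2
    have h3 : R ≤ n := (Int.le_ceil R).trans (by exact_mod_cast hn)
    exact (h2.trans (hR _ hz)).trans h3
  rw [Finset.mem_Icc]
  refine ⟨fun i => ?_, fun i => ?_⟩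
  · have := (abs_le.1 (h1 i)).1
    exact_mod_cast this
  · have := (abs_le.1 (h1 i)).2
    exact_mod_cast this

theorem common_lattice_point (VA VC : Finset (Fin 2 → ℝ)) (latA : ∀ v ∈ VA, IsLatticePt v)
    (latC : ∀ v ∈ VC, IsLatticePt v) (hM : Matching VA VC) (y : Fin 2 → ℝ)
    (hyA : y ∈ convexHull ℝ (VA : Set (Fin 2 → ℝ)))
    (hyC : y ∈ convexHull ℝ (VC : Set (Fin 2 → ℝ))) :
    ∃ q, IsLatticePt q ∧ q ∈ convexHull ℝ (VA : Set (Fin 2 → ℝ)) ∧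
      q ∈ convexHull ℝ (VC : Set (Fin 2 → ℝ)) := by
  classical
  by_contra hno
  push Not at hno
  set A := convexHull ℝ (VA : Set (Fin 2 → ℝ)) with hAdef
  set C := convexHull ℝ (VC : Set (Fin 2 → ℝ)) with hCdef
  have dneg : ∀ a n : Fin 2 → ℝ, dot2 a (-n) = - dot2 a n := by
    intro a n; simp only [dot2_eq, Pi.neg_apply]; ring
  obtain ⟨N₁, hN₁⟩ := hull_bound VA
  obtain ⟨N₂, hN₂⟩ := hull_bound VC
  let n := max N₁ N₂
  let W : Finset (Fin 2 → ℤ) := Finset.Icc (fun _ => -n) (fun _ => n)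
  have hWA : ∀ z, toR z ∈ A → z ∈ W := hN₁ n (le_max_left _ _)
  have hWC : ∀ z, toR z ∈ C → z ∈ W := hN₂ n (le_max_right _ _)
  have hsep : ∀ w : Fin 2 → ℤ, ∃ (f : Fin 2 → ℝ) (u : ℝ),
      ((∀ a ∈ A, dot2 a f < u) ∨ (∀ a ∈ C, dot2 a f < u)) ∧ u < dot2 (toR w) f := by
    intro w
    by_cases hw : toR w ∈ A
    · obtain ⟨f, u, h1, h2⟩ := separate C (convex_convexHull ℝ _)
        (VC.finite_toSet.isCompact_convexHull (𝕜 := ℝ)).isClosed (toR w)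
        (hno _ (fun i => ⟨w i, rfl⟩) hw)
      exact ⟨f, u, Or.inr h1, h2⟩
    · obtain ⟨f, u, h1, h2⟩ := separate A (convex_convexHull ℝ _)
        (VA.finite_toSet.isCompact_convexHull (𝕜 := ℝ)).isClosed (toR w) hw
      exact ⟨f, u, Or.inl h1, h2⟩
  choose f u hty hviol using hsep
  obtain ⟨t, -, htc, ht⟩ := doignon W (fun w z => dot2 (toR z) (f w) - u w) (by
      intro p hp q hq m hm
      simp only [W, Finset.mem_Icc, Pi.le_def] at hp hq ⊢
      have hm' : ∀ i, p i + q i = m i + m i := fun i => congrFun hm i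
      refine ⟨fun i => ?_, fun i => ?_⟩
      · linarith [hm' i, hp.1 i, hq.1 i]
      · linarith [hm' i, hp.2 i, hq.2 i]) (by
      intro w p q m hm
      have hm' : ∀ i, (p i : ℝ) + q i = m i + m i := fun i => by exact_mod_cast congrFun hm i
      simp only [dot2_eq, toR]
      linear_combination (f w 0) * hm' 0 + (f w 1) * hm' 1) W
    (fun w hw => ⟨w, hw, by simpa using hviol w⟩)
  let P : (Fin 2 → ℤ) → Prop := fun w => ∀ a ∈ A, dot2 a (f w) < u w
  have hcards := Finset.card_filter_add_card_filter_not (s := t) P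
  have hcase : (t.filter (fun w => ¬ P w)).card ≤ 1 ∨ (t.filter P).card ≤ 2 := by omega
  have hPC : ∀ w, ¬ P w → ∀ a ∈ C, dot2 a (f w) < u w := fun w hw => (hty w).resolve_left hw
  rcases hcase with h1 | h2
  · -- at most one halfplane around C
    have hv : ∃ v ∈ VA, ∀ w ∈ t, ¬ P w → dot2 v (f w) < u w := by
      rcases (t.filter (fun w => ¬ P w)).eq_empty_or_nonempty with he | ⟨w, hw⟩
      · obtain ⟨v, hv, -⟩ := exists_ge VA 0 y hyA
        refine ⟨v, hv, fun w hw hP => ?_⟩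
        have : w ∈ t.filter (fun w => ¬ P w) := Finset.mem_filter.2 ⟨hw, hP⟩
        rw [he] at this; simp at this
      · obtain ⟨v, hv, hvy⟩ := exists_ge VA (-(f w)) y hyA
        rw [dneg, dneg] at hvy
        refine ⟨v, hv, fun w' hw' hP => ?_⟩
        have : w' = w := Finset.card_le_one.1 h1 w' (Finset.mem_filter.2 ⟨hw', hP⟩) w hw
        subst this
        linarith [hPC w' hP y hyC]
    obtain ⟨v, hv, hvt⟩ := hv
    have hvA : v ∈ A := subset_convexHull ℝ _ hv
    obtain ⟨z, rfl⟩ := exists_toR (latA v hv)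
    obtain ⟨w, hw, hpos⟩ := ht z (hWA z hvA)
    by_cases hP : P w
    · linarith [hP _ hvA]
    · linarith [hvt w hw hP]
  · -- at most two halfplanes around A
    have hpair : ∀ z, toR z ∈ C → ∃ w ∈ t.filter P, u w < dot2 (toR z) (f w) := by
      intro z hz
      obtain ⟨w, hw, hpos⟩ := ht z (hWC z hz)
      refine ⟨w, Finset.mem_filter.2 ⟨hw, ?_⟩, by linarith⟩
      by_contra hP
      linarith [hPC w hP _ hz]
    have hij : ∃ i j, P i ∧ P j ∧ ∀ w ∈ t.filter P, w = i ∨ w = j := by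
      have hne : (t.filter P).Nonempty := by
        obtain ⟨v, hv, -⟩ := exists_ge VC 0 y hyC
        obtain ⟨z, rfl⟩ := exists_toR (latC v hv)
        obtain ⟨w, hw, -⟩ := hpair z (subset_convexHull ℝ _ hv)
        exact ⟨w, hw⟩
      have hpos := hne.card_pos
      have hmem : ∀ w ∈ t.filter P, P w := fun w hw => (Finset.mem_filter.1 hw).2
      have h12 : (t.filter P).card = 1 ∨ (t.filter P).card = 2 := by omega
      rcases h12 with h | h
      · obtain ⟨i, hi⟩ := Finset.card_eq_one.1 h
        rw [hi] at hmem ⊢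
        exact ⟨i, i, hmem i (by simp), hmem i (by simp), by simp⟩
      · obtain ⟨i, j, -, hi⟩ := Finset.card_eq_two.1 h
        rw [hi] at hmem ⊢
        exact ⟨i, j, hmem i (by simp), hmem j (by simp), by simp⟩
    obtain ⟨i, j, hi, hj, hall⟩ := hij
    refine wedge VA VC latA latC hM y hyA hyC (f i) (f j) (u i) (u j)
      (fun v hv => ⟨hi v (subset_convexHull ℝ _ hv), hj v (subset_convexHull ℝ _ hv)⟩)
      W hWC (fun z hz => ?_)
    obtain ⟨w, hw, h⟩ := hpair z hz
    rcases hall w hw with rfl | rfl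
    · exact Or.inl h
    · exact Or.inr h

lemma hull_reflect (x : Fin 2 → ℝ) (V V' : Set (Fin 2 → ℝ)) (h : ∀ v ∈ V, x - v ∈ V')
    (y : Fin 2 → ℝ) (hy : y ∈ convexHull ℝ V) : x - y ∈ convexHull ℝ V' := by
  have hc : Convex ℝ {y : Fin 2 → ℝ | x - y ∈ convexHull ℝ V'} := by
    intro a ha b hb s t hs ht hst
    have : x - (s • a + t • b) = s • (x - a) + t • (x - b) := by
      have : t = 1 - s := by linarith
      subst this
      ext i; simp; ring
    change x - (s • a + t • b) ∈ convexHull ℝ V'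
    rw [this]
    exact convex_convexHull ℝ _ ha hb hs ht hst
  have hsub : V ⊆ {y : Fin 2 → ℝ | x - y ∈ convexHull ℝ V'} :=
    fun v hv => subset_convexHull ℝ V' (h v hv)
  exact convexHull_min hsub hc hy

open Classical in
lemma matching_of_refines (VA VB : Finset (Fin 2 → ℝ)) (hVA : VA.Nonempty) (x : Fin 2 → ℝ)
    (href : FanRefines (convexHull ℝ (VA : Set (Fin 2 → ℝ)))
      (convexHull ℝ (VB : Set (Fin 2 → ℝ)))) :
    Matching VA (VB.image (fun b => x - b)) := by
  rintro N ⟨q, hq, q', hq', hne, hqq, hmin⟩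
  obtain ⟨b, hb, rfl⟩ := Finset.mem_image.1 hq
  obtain ⟨b', hb', rfl⟩ := Finset.mem_image.1 hq'
  have dsub : ∀ a b n : Fin 2 → ℝ, dot2 (a - b) n = dot2 a n - dot2 b n := by
    intro a b n; simp only [dot2_eq, Pi.sub_apply]; ring
  have dadd : ∀ a b n : Fin 2 → ℝ, dot2 a (b + n) = dot2 a b + dot2 a n := by
    intro a b n; simp only [dot2_eq, Pi.add_apply]; ring
  have dsmul : ∀ (t : ℝ) (b n : Fin 2 → ℝ), dot2 b (t • n) = t * dot2 b n := by
    intro a b n; simp only [dot2_eq, Pi.smul_apply, smul_eq_mul]; ring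
  have hbb : dot2 b N = dot2 b' N := by rw [dsub, dsub] at hqq; linarith
  have hbmax : ∀ p ∈ VB, dot2 p N ≤ dot2 b N := by
    intro p hp
    have := hmin _ (Finset.mem_image_of_mem _ hp)
    rw [dsub, dsub] at this; linarith
  have hbmax' := hull_le _ N _ hbmax
  obtain ⟨r, hr, hrmax⟩ := VA.exists_max_image (fun v => dot2 v N) hVA
  by_contra hcon
  have huniq : ∀ v ∈ VA, v ≠ r → dot2 v N < dot2 r N := by
    intro v hv hvr
    refine lt_of_le_of_ne (hrmax v hv) (fun h => hcon ?_)
    exact ⟨r, hr, v, hv, hvr.symm, h.symm, hrmax⟩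
  obtain ⟨w, hw, hsub⟩ := href r (subset_convexHull ℝ _ hr)
  have hkey : ∀ p ∈ VB, dot2 p N = dot2 b N → p = w := by
    intro p hp hpb
    let D : ℝ → Fin 2 → ℝ := fun t => N + t • (p - w)
    have hD : ∀ v, Continuous (fun t => dot2 v (D t)) := by
      intro v
      simp only [D, dadd, dsmul]
      fun_prop
    have hD0 : ∀ v, dot2 v (D 0) = dot2 v N := by intro v; simp [D]
    have ev : ∀ᶠ t in nhds (0 : ℝ), ∀ v ∈ VA, dot2 v (D t) ≤ dot2 r (D t) := by
      rw [Filter.eventually_all_finset]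
      intro v hv
      by_cases hvr : v = r
      · subst hvr; exact Filter.Eventually.of_forall (fun _ => le_rfl)
      · exact ((hD v).continuousAt.eventually_lt (hD r).continuousAt
          (by rw [hD0, hD0]; exact huniq v hv hvr)).mono (fun _ h => h.le)
    obtain ⟨ε, hε, hball⟩ := Metric.eventually_nhds_iff.1 ev
    have h1 := hball (y := ε / 2) (by
      rw [Real.dist_eq, sub_zero, abs_of_pos (by linarith)]; linarith)
    have hmem : D (ε / 2) ∈ normalCone (convexHull ℝ (VA : Set (Fin 2 → ℝ))) r :=
      hull_le _ _ _ h1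
    have h2 := hsub hmem p (subset_convexHull ℝ _ hp)
    have h3 := hbmax' w hw
    simp only [D, dadd, dsmul] at h2
    have h4 : ε / 2 * dot2 (p - w) (p - w) ≤ 0 := by rw [dsub]; nlinarith
    have h5 : dot2 (p - w) (p - w) ≤ 0 := by
      by_contra h
      push Not at h
      have := mul_pos (half_pos hε) h
      linarith
    rw [dot2_eq] at h5
    rw [← sub_eq_zero]
    ext i
    fin_cases i
    · change (p - w) 0 = 0
      nlinarith [mul_self_nonneg ((p - w) 0), mul_self_nonneg ((p - w) 1)]
    · change (p - w) 1 = 0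
      nlinarith [mul_self_nonneg ((p - w) 0), mul_self_nonneg ((p - w) 1)]
  apply hne
  rw [hkey b hb rfl, hkey b' hb' hbb.symm]

/-- Fakhruddin's theorem in dimension 2: lattice points of a Minkowski sum of an
ample polygon and a nef polygon split. -/
theorem stmt12 (A B : Set (Fin 2 → ℝ))
    (hA : IsLatticePolytope A) (hB : IsLatticePolytope B)
    (hAdim : (interior A).Nonempty) (hAsm : IsSmoothPolygon A)
    (href : FanRefines A B) :
    {x : Fin 2 → ℝ | x ∈ A + B ∧ IsLatticePt x} =
      {x : Fin 2 → ℝ | ∃ a b : Fin 2 → ℝ,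
        a ∈ A ∧ IsLatticePt a ∧ b ∈ B ∧ IsLatticePt b ∧ x = a + b} := by
    classical
  obtain ⟨VA, hVA, latA, rfl⟩ := hA
  obtain ⟨VB, hVB, latB, rfl⟩ := hB
  ext x
  constructor
  · rintro ⟨⟨a, ha, b, hb, rfl⟩, hx⟩
    have hx : IsLatticePt (a + b) := hx
    have hM := matching_of_refines VA VB hVA (a + b) href
    obtain ⟨q, hq, hqA, hqC⟩ := common_lattice_point VA (VB.image (fun v => (a + b) - v)) latA (by
        intro v hv
        obtain ⟨v', hv', rfl⟩ := Finset.mem_image.1 hv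
        intro i
        obtain ⟨z, hz⟩ := hx i
        obtain ⟨z', hz'⟩ := latB v' hv' i
        exact ⟨z - z', by rw [Pi.sub_apply, hz, hz']; push_cast; ring⟩) hM a ha (by
        have := hull_reflect (a + b) (VB : Set (Fin 2 → ℝ))
          ((VB.image (fun v => (a + b) - v) : Finset (Fin 2 → ℝ)) : Set (Fin 2 → ℝ))
          (fun v hv => Finset.mem_coe.2 (Finset.mem_image_of_mem (fun v => (a + b) - v) hv)) b hb
        simpa using this)
    refine ⟨q, a + b - q, hqA, hq, ?_, ?_, by simp⟩
    · refine hull_reflect (a + b) _ _ ?_ q hqC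
      intro v hv
      obtain ⟨v', hv', rfl⟩ := Finset.mem_image.1 (Finset.mem_coe.1 hv)
      simpa using hv'
    · intro i
      obtain ⟨z, hz⟩ := hx i
      obtain ⟨z', hz'⟩ := hq i
      exact ⟨z - z', by rw [Pi.sub_apply, hz, hz']; push_cast; ring⟩
  · rintro ⟨a, b, ha, hal, hb, hbl, rfl⟩
    refine ⟨Set.add_mem_add ha hb, fun i => ?_⟩
    obtain ⟨z, hz⟩ := hal i
    obtain ⟨z', hz'⟩ := hbl i
    exact ⟨z + z', by rw [Pi.add_apply, hz, hz']; push_cast; ring⟩
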